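/- Fix θ₀ > 1 and h ∈ ℝ, set θ_n := θ₀ + h/√n, and let X ∈ {−1,1}ⁿ have the Curie–Weiss distribution P_{θ₀,CW}. Then the log-likelihood ratio log( dP_{θ_n,CW}/dP_{θ₀,CW} (X) ) = (h/(2√n))·n·X̄² − ( Z_n(θ_n,CW) − Z_n(θ₀,CW) ) converges in distribution to the Gaussian law N( −h²R(θ₀)/2, h²R(θ₀) ), where R(θ₀) := m(θ₀)²·σ²(θ₀). -/

import Mathlib

open MeasureTheory ProbabilityTheory Filter

noncomputable def spin (b : Bool) : ℝ := if b then 1 else -1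

noncomputable def mag (n : ℕ) (x : Fin n → Bool) : ℝ := (∑ i, spin (x i)) / n

/-- Unnormalized Curie–Weiss measure on `{-1,1}ⁿ` (encoded by `Fin n → Bool`). -/
noncomputable def cwUnnorm (n : ℕ) (θ : ℝ) : Measure (Fin n → Bool) :=
  ∑ x : Fin n → Bool,
    ENNReal.ofReal (Real.exp ((n : ℝ) * θ * mag n x ^ 2 / 2)) • Measure.dirac x

/-- The Curie–Weiss model `P_{θ,CW}`. -/
noncomputable def cwMeasure (n : ℕ) (θ : ℝ) : Measure (Fin n → Bool) :=
  (cwUnnorm n θ Set.univ)⁻¹ • cwUnnorm n θ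

/-- Log normalizing constant of the Curie–Weiss model. -/
noncomputable def Zcw (n : ℕ) (θ : ℝ) : ℝ :=
  Real.log (∑ x : Fin n → Bool, Real.exp ((n : ℝ) * θ * mag n x ^ 2 / 2))


lemma cw_tanh_deriv (x : ℝ) : HasDerivAt Real.tanh (1 - Real.tanh x ^ 2) x := by
  have h := (Real.hasDerivAt_sinh x).div (Real.hasDerivAt_cosh x) (Real.cosh_pos x).ne'
  have e : (Real.sinh / Real.cosh) = Real.tanh := by
    funext y; simp [Real.tanh_eq_sinh_div_cosh]
  rw [e] at h
  refine h.congr_deriv ?_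
  rw [Real.tanh_eq_sinh_div_cosh]
  have := (Real.cosh_pos x).ne'
  field_simp

lemma cw_tanh_mono : Monotone Real.tanh := by
  apply monotone_of_deriv_nonneg (fun x => (cw_tanh_deriv x).differentiableAt)
  intro x
  rw [(cw_tanh_deriv x).deriv]
  have := Real.tanh_sq_lt_one x
  linarith

lemma cw_tanh_concave : ConcaveOn ℝ (Set.Ici 0) Real.tanh := by
  have hd : Differentiable ℝ Real.tanh := fun x => (cw_tanh_deriv x).differentiableAt
  apply AntitoneOn.concaveOn_of_deriv (convex_Ici 0) hd.continuous.continuousOn hd.differentiableOn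
  intro x hx y hy hxy
  rw [(cw_tanh_deriv x).deriv, (cw_tanh_deriv y).deriv]
  rw [interior_Ici] at hx
  have h0 : 0 ≤ Real.tanh x := by
    have := cw_tanh_mono (le_of_lt (Set.mem_Ioi.1 hx)); simpa using this
  have := cw_tanh_mono hxy
  nlinarith

/-- The rate function. -/
noncomputable def cwPhi (θ z : ℝ) : ℝ := Real.log (Real.cosh z) - z ^ 2 / (2 * θ)

lemma cwPhi_deriv (θ z : ℝ) (hθ : 0 < θ) :
    HasDerivAt (cwPhi θ) (Real.tanh z - z / θ) z := by
  have h1 := (Real.hasDerivAt_cosh z).log (Real.cosh_pos z).ne'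
  have h2 := ((hasDerivAt_id z).pow 2).div_const (2 * θ)
  have h := h1.sub h2
  refine HasDerivAt.congr_deriv h ?_
  rw [Real.tanh_eq_sinh_div_cosh]
  simp
  field_simp

lemma cwPhi_deriv2 (θ z : ℝ) :
    HasDerivAt (fun z => Real.tanh z - z / θ) ((1 - Real.tanh z ^ 2) - 1 / θ) z :=
  (cw_tanh_deriv z).sub ((hasDerivAt_id z).div_const θ)

lemma cw_kappa (θ z : ℝ) (hθ : 0 < θ) (hz : 0 < z) (h : Real.tanh z = z / θ) :
    (1 - Real.tanh z ^ 2) < 1 / θ := by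
  have h1 : 2 * z < Real.sinh (2 * z) := Real.self_lt_sinh_iff.2 (by linarith)
  rw [Real.sinh_two_mul] at h1
  have hc := Real.cosh_pos z
  have e : 1 / θ = Real.tanh z / z := by rw [h]; field_simp
  rw [e, Real.tanh_eq_sinh_div_cosh]
  have e2 : 1 - (Real.sinh z / Real.cosh z) ^ 2 = 1 / Real.cosh z ^ 2 := by
    field_simp
    have := Real.cosh_sq z
    linarith
  rw [e2, div_div, div_lt_div_iff₀ (by positivity) (by positivity)]
  nlinarith

lemma cw_bound (θ z0 : ℝ) (hθ : 0 < θ) (hz : 0 < z0) (h : Real.tanh z0 = z0 / θ) :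
    ∃ c > 0, ∀ z, 0 ≤ z → cwPhi θ z ≤ cwPhi θ z0 - c * (z - z0) ^ 2 := by
  have hcc := cw_tanh_concave
  have hcc2 : ∀ x y a b : ℝ, 0 ≤ x → 0 ≤ y → 0 ≤ a → 0 ≤ b → a + b = 1 →
      a * Real.tanh x + b * Real.tanh y ≤ Real.tanh (a * x + b * y) := by
    intro x y a b hx hy ha hb hab
    have := hcc.2 (Set.mem_Ici.2 hx) (Set.mem_Ici.2 hy) ha hb hab
    simpa using this
  have hk := cw_kappa θ z0 hθ hz h
  set d := Real.tanh (z0 / 2) - z0 / 2 / θ with hd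
  have ht0 : 0 < Real.tanh z0 := by rw [h]; positivity
  have hdpos : 0 < d := by
    have e : Real.tanh z0 * (1 + Real.tanh (z0/2) ^ 2) = 2 * Real.tanh (z0/2) := by
      obtain ⟨w, rfl⟩ : ∃ w, z0 = 2 * w := ⟨z0/2, by ring⟩
      rw [mul_div_cancel_left₀ w two_ne_zero]
      have hcw := Real.cosh_pos w
      have hcw2 : 0 < Real.cosh w ^ 2 + Real.sinh w ^ 2 := by positivity
      rw [Real.tanh_eq_sinh_div_cosh, Real.tanh_eq_sinh_div_cosh, Real.sinh_two_mul,
        Real.cosh_two_mul]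
      field_simp
    have : z0 / 2 / θ = Real.tanh z0 / 2 := by rw [h]; ring
    rw [hd, this]
    have h2 : 0 < Real.tanh (z0/2) := by
      by_contra hcon
      nlinarith [sq_nonneg (Real.tanh (z0/2))]
    nlinarith [mul_pos ht0 (pow_pos h2 2)]
  have hdiff : ∀ c : ℝ, ∀ z, HasDerivAt (fun z => cwPhi θ z + c * (z - z0) ^ 2)
      (Real.tanh z - z / θ + 2 * c * (z - z0)) z := by
    intro c z
    have := (cwPhi_deriv θ z hθ).add ((((hasDerivAt_id z).sub_const z0).pow 2).const_mul c)
    refine HasDerivAt.congr_deriv this ?_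
    simp; ring
  set k := 1 / θ - (1 - Real.tanh z0 ^ 2) with hkdef
  set c := min (k / 2) (d / z0) with hc
  have hcpos : 0 < c := lt_min (by linarith) (by positivity)
  have hc1 : 2 * c ≤ k := by have := min_le_left (k/2) (d/z0); linarith
  have hc2 : c * z0 ≤ d := by
    have := min_le_right (k/2) (d/z0)
    rwa [← hc, le_div_iff₀ hz] at this
  have hcont : ∀ c : ℝ, Continuous (fun z => cwPhi θ z + c * (z - z0) ^ 2) := fun c =>
    continuous_iff_continuousAt.2 fun z => (hdiff c z).continuousAt
  -- right
  have hR : ∀ z, z0 ≤ z → cwPhi θ z ≤ cwPhi θ z0 - c * (z - z0) ^ 2 := by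
    intro z hzz
    have := antitoneOn_of_deriv_nonpos (convex_Ici z0) (hcont c).continuousOn
      (fun x _ => (hdiff c x).differentiableAt.differentiableWithinAt) (by
        intro x hx
        rw [interior_Ici, Set.mem_Ioi] at hx
        rw [(hdiff c x).deriv]
        have hs := hcc.slope_le_deriv (x := z0) (y := x)
          (Set.mem_Ici.2 hz.le) (Set.mem_Ici.2 (by linarith)) hx (cw_tanh_deriv z0).differentiableAt
        rw [(cw_tanh_deriv z0).deriv, slope_def_field, div_le_iff₀ (by linarith)] at hs
        have e : x / θ = Real.tanh z0 + (x - z0) * (1/θ) := by rw [h]; ring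
        rw [e]
        nlinarith) (Set.mem_Ici.2 le_rfl) (Set.mem_Ici.2 hzz) hzz
    simp at this
    linarith
  have hM : ∀ z, z0 / 2 ≤ z → z ≤ z0 → cwPhi θ z ≤ cwPhi θ z0 - c * (z - z0) ^ 2 := by
    intro z hz1 hz2
    have := monotoneOn_of_deriv_nonneg (convex_Icc (z0/2) z0) (hcont c).continuousOn
      (fun x _ => (hdiff c x).differentiableAt.differentiableWithinAt) (by
        intro x hx
        rw [interior_Icc, Set.mem_Ioo] at hx
        rw [(hdiff c x).deriv]
        have hs := hcc2 (z0/2) z0 ((z0 - x) / (z0/2)) (1 - (z0 - x) / (z0/2)) (by linarith) hz.le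
          (div_nonneg (by linarith) (by linarith))
          (by rw [sub_nonneg, div_le_one (by linarith)]; linarith) (by ring)
        have e1 : (z0 - x) / (z0/2) * (z0/2) + (1 - (z0 - x) / (z0/2)) * z0 = x := by
          field_simp; ring
        rw [e1] at hs
        set a := (z0 - x) / (z0/2) with ha
        have e2 : z0 - x = a * (z0/2) := by rw [ha]; field_simp
        have ha0 : 0 ≤ a := div_nonneg (by linarith) (by linarith)
        have e3 : Real.tanh (z0/2) = d + z0/2/θ := by rw [hd]; ring
        rw [e3, h] at hs
        have e4 : x = z0 - a * (z0/2) := by linarith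
        have e5 : x / θ = a * (z0/2/θ) + (1 - a) * (z0/θ) := by rw [e4]; ring
        have e6 : x - z0 = - (a * (z0/2)) := by linarith
        rw [e5, e6]
        nlinarith) (Set.mem_Icc.2 ⟨hz1, hz2⟩) (Set.mem_Icc.2 ⟨by linarith, le_rfl⟩) hz2
    simp at this
    linarith
  have hL : ∀ z, 0 ≤ z → z ≤ z0/2 → cwPhi θ z ≤ cwPhi θ (z0/2) := by
    intro z hz1 hz2
    have := monotoneOn_of_deriv_nonneg (convex_Icc 0 z0) (hcont 0).continuousOn
      (fun x _ => (hdiff 0 x).differentiableAt.differentiableWithinAt) (by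
        intro x hx
        rw [interior_Icc, Set.mem_Ioo] at hx
        rw [(hdiff 0 x).deriv]
        have hs := hcc2 0 z0 (1 - x/z0) (x/z0) le_rfl hz.le
          (by rw [sub_nonneg, div_le_one (by linarith)]; linarith) 
          (div_nonneg (by linarith) (by linarith)) (by ring)
        simp only [Real.tanh_zero, mul_zero, zero_add] at hs
        have e1 : x / z0 * z0 = x := by field_simp
        rw [e1, h] at hs
        have e2 : x / z0 * (z0 / θ) = x / θ := by field_simp
        rw [e2] at hs
        linarith) (Set.mem_Icc.2 ⟨hz1, by linarith⟩) (Set.mem_Icc.2 ⟨by linarith, by linarith⟩) hz2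
    simpa using this
  refine ⟨c / 4, by positivity, fun z hz0 => ?_⟩
  rcases le_total z0 z with h1 | h1
  · have := hR z h1
    nlinarith [mul_nonneg hcpos.le (sq_nonneg (z - z0))]
  rcases le_total (z0/2) z with h2 | h2
  · have := hM z h2 h1
    nlinarith [mul_nonneg hcpos.le (sq_nonneg (z - z0))]
  · have h3 := hL z hz0 h2
    have h4 := hM (z0/2) le_rfl (by linarith)
    have : (z - z0) ^ 2 ≤ z0 ^ 2 := by nlinarith
    nlinarith [mul_le_mul_of_nonneg_left this hcpos.le]

lemma cw_taylor (θ z0 : ℝ) (hθ : 0 < θ) (h : Real.tanh z0 = z0 / θ) (v : ℝ) :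
    Tendsto (fun n : ℕ => (n:ℝ) * (cwPhi θ (z0 + v / √(n:ℝ)) - cwPhi θ z0)) atTop
      (nhds (((1 - Real.tanh z0 ^ 2) - 1 / θ) / 2 * v ^ 2)) := by
  set k := (1 - Real.tanh z0 ^ 2) - 1 / θ
  by_cases hv : v = 0
  · subst hv; simp
  have key : Tendsto (fun x => (cwPhi θ (z0 + x) - cwPhi θ z0) / x ^ 2) (nhdsWithin 0 {0}ᶜ)
      (nhds (k / 2)) := by
    apply HasDerivAt.lhopital_zero_nhdsNE (f' := fun x => Real.tanh (z0 + x) - (z0 + x) / θ)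
      (g' := fun x => 2 * x)
    · refine Eventually.of_forall fun x => ?_
      have := (cwPhi_deriv θ (z0 + x) hθ).comp_const_add z0 x
      exact this.sub_const _
    · refine Eventually.of_forall fun x => ?_
      simpa using hasDerivAt_pow 2 x
    · filter_upwards [self_mem_nhdsWithin] with x hx
      simpa using hx
    · have : ContinuousAt (fun x => cwPhi θ (z0 + x) - cwPhi θ z0) 0 := by
        have := (cwPhi_deriv θ (z0 + 0) hθ).comp_const_add z0 0
        exact (this.sub_const _).continuousAt
      have := this.tendsto.mono_left (nhdsWithin_le_nhds (s := {0}ᶜ))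
      simpa using this
    · have : ContinuousAt (fun x : ℝ => x ^ 2) 0 := by fun_prop
      have := this.tendsto.mono_left (nhdsWithin_le_nhds (s := {0}ᶜ))
      simpa using this
    · have := (cwPhi_deriv2 θ z0).tendsto_slope_zero
      have := this.div_const 2
      refine this.congr fun x => ?_
      rw [h]
      simp only [smul_eq_mul, sub_self, sub_zero]
      rw [← div_div, div_right_comm]; ring
  have hx : Tendsto (fun n : ℕ => v / √(n:ℝ)) atTop (nhdsWithin 0 {0}ᶜ) := by
    rw [tendsto_nhdsWithin_iff]
    constructor
    · exact tendsto_const_nhds.div_atTop (Real.tendsto_sqrt_atTop.comp tendsto_natCast_atTop_atTop)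
    · filter_upwards [eventually_gt_atTop 0] with n hn
      have : (0:ℝ) < n := by exact_mod_cast hn
      have : √(n:ℝ) ≠ 0 := by positivity
      simp [hv, this]
  have := (key.comp hx).mul_const (v ^ 2)
  refine this.congr' ?_
  filter_upwards [eventually_gt_atTop 0] with n hn
  have : (0:ℝ) < n := by exact_mod_cast hn
  simp only [Function.comp]
  rw [div_pow, Real.sq_sqrt this.le]
  field_simp

lemma cw_sum_exp (n : ℕ) (w : ℂ) :
    ∑ x : Fin n → Bool, Complex.exp (((∑ i, spin (x i) : ℝ) : ℂ) * w) =
      (2 * Complex.cosh w) ^ n := by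
  have h1 : ∀ x : Fin n → Bool, Complex.exp (((∑ i, spin (x i) : ℝ) : ℂ) * w) =
      ∏ i, Complex.exp ((spin (x i) : ℂ) * w) := by
    intro x
    rw [← Complex.exp_sum, ← Finset.sum_mul]
    push_cast; rfl
  simp_rw [h1]
  have := Finset.prod_univ_sum (fun _ : Fin n => (Finset.univ : Finset Bool))
    (fun _ b => Complex.exp ((spin b : ℂ) * w))
  rw [Fintype.piFinset_univ] at this
  rw [← this]
  simp [spin, Complex.cosh]
  congr 1
  ring

/-- The integrand. -/
noncomputable def cwF (n : ℕ) (T : ℂ) (u : ℝ) : ℂ :=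
  (2 * Complex.cosh ((u / √(n:ℝ) : ℝ) : ℂ)) ^ n * Complex.exp (-(u:ℂ) ^ 2 / (2 * T))

lemma cwF_eq (n : ℕ) (T : ℂ) (u : ℝ) : cwF n T u =
    ∑ x : Fin n → Bool, Complex.exp (-(1 / (2 * T)) * (u:ℂ) ^ 2 +
      (((∑ i, spin (x i)) / √(n:ℝ) : ℝ) : ℂ) * u + 0) := by
  rw [cwF, ← cw_sum_exp, Finset.sum_mul]
  refine Finset.sum_congr rfl fun x _ => ?_
  rw [← Complex.exp_add]
  congr 1
  push_cast
  ring

lemma cw_re (T : ℂ) (hT : 0 < T.re) : 0 < (1 / (2 * T)).re := by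
  rw [one_div, Complex.inv_re]
  have : T ≠ 0 := by rintro rfl; simp at hT
  have h2 : 0 < Complex.normSq (2 * T) := Complex.normSq_pos.2 (by simpa using this)
  apply div_pos _ h2
  simpa using hT

lemma cwF_integrable (n : ℕ) (T : ℂ) (hT : 0 < T.re) : Integrable (cwF n T) := by
  have : cwF n T = fun u => _ := funext (cwF_eq n T)
  rw [this]
  exact integrable_finsetSum _ fun x _ => integrable_cexp_quadratic (cw_re T hT) _ _

lemma cwF_integral (n : ℕ) (hn : 0 < n) (T : ℂ) (hT : 0 < T.re) : ∫ u, cwF n T u =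
    (Real.pi / (1 / (2 * T))) ^ (1 / 2 : ℂ) *
      ∑ x : Fin n → Bool, Complex.exp ((n:ℂ) * T * (mag n x : ℂ) ^ 2 / 2) := by
  have hT0 : T ≠ 0 := by rintro rfl; simp at hT
  simp_rw [cwF_eq n T]
  rw [integral_finsetSum _ fun x _ => integrable_cexp_quadratic (cw_re T hT) _ _, Finset.mul_sum]
  refine Finset.sum_congr rfl fun x _ => ?_
  rw [integral_cexp_quadratic (by rw [Complex.neg_re]; have := cw_re T hT; linarith), neg_neg]
  congr 2
  rw [mag]
  have hn' : (0:ℝ) < n := by exact_mod_cast hn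
  have hnc : (n:ℂ) ≠ 0 := by exact_mod_cast hn.ne'
  have hs : ((√(n:ℝ) : ℝ) : ℂ) ^ 2 = n := by
    rw [← Complex.ofReal_pow, Real.sq_sqrt hn'.le]; simp
  push_cast
  rw [div_pow, hs]
  field_simp
  ring

lemma cwF_even (n : ℕ) (T : ℂ) (u : ℝ) : cwF n T (-u) = cwF n T u := by
  simp [cwF, neg_div]

lemma cwF_half (n : ℕ) (T : ℂ) (hT : 0 < T.re) (a : ℝ) : ∫ u, cwF n T u =
    2 * ∫ v, (Set.Ioi (0:ℝ)).indicator (cwF n T) (v + a) := by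
  rw [integral_add_right_eq_self (fun v => (Set.Ioi (0:ℝ)).indicator (cwF n T) v),
    integral_indicator measurableSet_Ioi]
  have hi := cwF_integrable n T hT
  rw [← intervalIntegral.integral_Iic_add_Ioi (b := 0) hi.integrableOn hi.integrableOn]
  have := integral_comp_neg_Iic (0:ℝ) (cwF n T)
  simp_rw [cwF_even, neg_zero] at this
  rw [this]; ring

/-- The normalized exponent. -/
noncomputable def cwE (θ z0 : ℝ) (t : ℂ) (n : ℕ) (v : ℝ) : ℂ :=
  (((n:ℝ) * (cwPhi θ (z0 + v / √(n:ℝ)) - cwPhi θ z0) : ℝ) : ℂ) +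
    t / (2 * θ * (θ + t / (√(n:ℝ) : ℝ))) *
      (2 * z0 * v + (v:ℂ) ^ 2 / (√(n:ℝ) : ℝ) - (z0:ℂ) ^ 2 * t / θ)

lemma cwF_cwE (θ z0 : ℝ) (hθ : 0 < θ) (t : ℂ) (n : ℕ) (hn : 0 < n) (v : ℝ)
    (hT : (θ + t / (√(n:ℝ) : ℝ) : ℂ) ≠ 0) :
    cwF n (θ + t / (√(n:ℝ) : ℝ)) (v + √(n:ℝ) * z0) =
      2 ^ n * Complex.exp (t * (√(n:ℝ) : ℝ) * ((z0 / θ : ℝ) : ℂ) ^ 2 / 2 + (n:ℂ) * cwPhi θ z0) *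
        Complex.exp (cwE θ z0 t n v) := by
  have hn' : (0:ℝ) < n := by exact_mod_cast hn
  have hs0 : 0 < √(n:ℝ) := Real.sqrt_pos.2 hn'
  have e1 : (v + √(n:ℝ) * z0) / √(n:ℝ) = z0 + v / √(n:ℝ) := by field_simp; ring
  rw [cwF, e1, mul_pow, mul_assoc, mul_assoc, ← Complex.exp_add]
  congr 1
  have e2 : Complex.cosh ((z0 + v / √(n:ℝ) : ℝ) : ℂ) ^ n =
      Complex.exp (((n:ℝ) * Real.log (Real.cosh (z0 + v / √(n:ℝ))) : ℝ) : ℂ) := by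
    rw [← Complex.ofReal_cosh, ← Complex.ofReal_pow, ← Complex.ofReal_exp]
    congr 1
    rw [mul_comm, Real.exp_mul, Real.exp_log (Real.cosh_pos _), Real.rpow_natCast]
  rw [e2, ← Complex.exp_add]
  congr 1
  have e3 : cwPhi θ (z0 + v / √(n:ℝ)) = Real.log (Real.cosh (z0 + v / √(n:ℝ))) -
    (z0 + v / √(n:ℝ)) ^ 2 / (2 * θ) := rfl
  rw [cwE, e3]
  generalize Real.log (Real.cosh (z0 + v / √(n:ℝ))) = L
  generalize cwPhi θ z0 = P
  have hs : (n:ℂ) = ((√(n:ℝ) : ℝ) : ℂ) ^ 2 := by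
    rw [← Complex.ofReal_pow, Real.sq_sqrt hn'.le]; simp
  push_cast
  rw [hs]
  have hsc : ((√(n:ℝ) : ℝ) : ℂ) ≠ 0 := by exact_mod_cast hs0.ne'
  have hθc : (θ : ℂ) ≠ 0 := by exact_mod_cast hθ.ne'
  generalize ((√(n:ℝ) : ℝ) : ℂ) = s at *
  obtain ⟨T, hTT⟩ : ∃ T : ℂ, T = θ + t / s := ⟨_, rfl⟩
  rw [← hTT] at hT ⊢
  have ht : t = (T - θ) * s := by rw [hTT]; field_simp; ring
  rw [ht]
  field_simp
  ring

lemma cw_Tn (θ : ℝ) (t : ℂ) : Tendsto (fun n : ℕ => (θ + t / (√(n:ℝ) : ℝ) : ℂ)) atTop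
    (nhds (θ:ℂ)) := by
  have h1 : Tendsto (fun n : ℕ => ((√(n:ℝ))⁻¹ : ℝ)) atTop (nhds 0) :=
    (Real.tendsto_sqrt_atTop.comp tendsto_natCast_atTop_atTop).inv_tendsto_atTop
  have h2 : Tendsto (fun n : ℕ => (((√(n:ℝ))⁻¹ : ℝ) : ℂ)) atTop (nhds ((0:ℝ):ℂ)) :=
    (Complex.continuous_ofReal.tendsto 0).comp h1
  have h3 := (h2.const_mul t).const_add (θ:ℂ)
  simp only [Complex.ofReal_zero, mul_zero, add_zero] at h3
  refine h3.congr fun n => ?_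
  push_cast
  rw [div_eq_mul_inv]

lemma cwE_tendsto (θ z0 : ℝ) (hθ : 0 < θ) (h : Real.tanh z0 = z0 / θ) (t : ℂ) (v : ℝ) :
    Tendsto (fun n => cwE θ z0 t n v) atTop
      (nhds ((((1 - Real.tanh z0 ^ 2) - 1 / θ) / 2 : ℝ) * (v:ℂ) ^ 2 + t * z0 / θ ^ 2 * v +
        (- (t ^ 2 * z0 ^ 2 / (2 * θ ^ 3))))) := by
  have hθc : (θ : ℂ) ≠ 0 := by exact_mod_cast hθ.ne'
  have h1 := (Complex.continuous_ofReal.tendsto _).comp (cw_taylor θ z0 hθ h v)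
  have h2 : Tendsto (fun n : ℕ => t / (2 * θ * (θ + t / (√(n:ℝ) : ℝ)))) atTop
      (nhds (t / (2 * θ * θ))) :=
    tendsto_const_nhds.div ((cw_Tn θ t).const_mul (2 * θ : ℂ)) (by simp [hθc])
  have h3 : Tendsto (fun n : ℕ => (2 * z0 * v + (v:ℂ) ^ 2 / (√(n:ℝ) : ℝ) - (z0:ℂ) ^ 2 * t / θ))
      atTop (nhds (2 * z0 * v - (z0:ℂ) ^ 2 * t / θ)) := by
    have := ((cw_Tn 0 ((v:ℂ) ^ 2)).const_add (2 * z0 * v : ℂ)).sub_const ((z0:ℂ) ^ 2 * t / θ)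
    simpa using this
  have h4 := h1.add (h2.mul h3)
  refine (h4.congr fun n => ?_).trans (le_of_eq ?_)
  · simp only [cwE, Function.comp]
  · congr 1
    push_cast
    field_simp
    ring

lemma cwE_re (θ z0 : ℝ) (hθ : 0 < θ) (hz : 0 < z0) (h : Real.tanh z0 = z0 / θ) (t : ℂ) :
    ∃ b > 0, ∃ C : ℝ, ∀ᶠ n : ℕ in atTop, ∀ v : ℝ, 0 < v + √(n:ℝ) * z0 →
      (cwE θ z0 t n v).re ≤ C - b * v ^ 2 := by
  obtain ⟨c, hc, hb⟩ := cw_bound θ z0 hθ hz h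
  set A := ‖t‖ / θ ^ 2 with hA
  have hA0 : 0 ≤ A := by positivity
  refine ⟨c / 4, by positivity, (2 * A * z0) ^ 2 / c + A * (z0 ^ 2 * ‖t‖ / θ), ?_⟩
  have hT : ∀ᶠ n : ℕ in atTop, θ / 2 < ‖(θ + t / (√(n:ℝ) : ℝ) : ℂ)‖ := by
    have := (cw_Tn θ t).norm
    apply this.eventually_const_lt
    rw [Complex.norm_real, Real.norm_eq_abs, abs_of_pos hθ]; linarith
  have hs : ∀ᶠ n : ℕ in atTop, A / √(n:ℝ) < c / 2 := by
    have : Tendsto (fun n : ℕ => A / √(n:ℝ)) atTop (nhds 0) :=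
      tendsto_const_nhds.div_atTop (Real.tendsto_sqrt_atTop.comp tendsto_natCast_atTop_atTop)
    exact this.eventually_lt_const (by positivity)
  filter_upwards [hT, hs, eventually_gt_atTop 0] with n hT hs hn v hv
  have hn' : (0:ℝ) < n := by exact_mod_cast hn
  have hs0 : 0 < √(n:ℝ) := Real.sqrt_pos.2 hn'
  rw [cwE, Complex.add_re, Complex.ofReal_re]
  have h1 : (n:ℝ) * (cwPhi θ (z0 + v / √(n:ℝ)) - cwPhi θ z0) ≤ - c * v ^ 2 := by
    have hz' : 0 ≤ z0 + v / √(n:ℝ) := by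
      have : z0 + v / √(n:ℝ) = (v + √(n:ℝ) * z0) / √(n:ℝ) := by field_simp; ring
      rw [this]; positivity
    have := hb _ hz'
    have e : (z0 + v / √(n:ℝ) - z0) ^ 2 = v ^ 2 / n := by
      rw [add_sub_cancel_left, div_pow, Real.sq_sqrt hn'.le]
    rw [e] at this
    calc (n:ℝ) * (cwPhi θ (z0 + v / √(n:ℝ)) - cwPhi θ z0) ≤ n * (- (c * (v ^ 2 / n))) := by
          apply mul_le_mul_of_nonneg_left _ hn'.le; linarith
      _ = - c * v ^ 2 := by field_simp
  have h2 : ‖t / (2 * θ * (θ + t / (√(n:ℝ) : ℝ)))‖ ≤ A := by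
    rw [norm_div, norm_mul, norm_mul, Complex.norm_real, Real.norm_eq_abs, abs_of_pos hθ, hA]
    apply div_le_div_of_nonneg_left (norm_nonneg _) (by positivity)
    simp only [Complex.norm_ofNat]
    nlinarith
  have h3 : ‖(2 * z0 * v + (v:ℂ) ^ 2 / (√(n:ℝ) : ℝ) - (z0:ℂ) ^ 2 * t / θ)‖ ≤
      2 * z0 * |v| + v ^ 2 / √(n:ℝ) + z0 ^ 2 * ‖t‖ / θ := by
    refine (norm_sub_le _ _).trans (add_le_add ((norm_add_le _ _).trans (add_le_add ?_ ?_)) ?_)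
    · simp [abs_of_pos hz]
    · simp [abs_of_pos hs0]
    · simp [abs_of_pos hθ]
  have h4 := (Complex.re_le_norm _).trans ((norm_mul_le (t / (2 * θ * (θ + t / (√(n:ℝ) : ℝ))))
    (2 * z0 * v + (v:ℂ) ^ 2 / (√(n:ℝ) : ℝ) - (z0:ℂ) ^ 2 * t / θ)).trans
    (mul_le_mul h2 h3 (norm_nonneg _) hA0))
  have h5 : A * (v ^ 2 / √(n:ℝ)) ≤ c / 2 * v ^ 2 := by
    calc A * (v ^ 2 / √(n:ℝ)) = A / √(n:ℝ) * v ^ 2 := by ring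
      _ ≤ _ := mul_le_mul_of_nonneg_right hs.le (sq_nonneg v)
  have h6 : A * (2 * z0 * |v|) ≤ c / 4 * v ^ 2 + (2 * A * z0) ^ 2 / c := by
    have e : c / 4 * v ^ 2 + (2 * A * z0) ^ 2 / c - A * (2 * z0 * |v|) =
        (c * |v| / 2 - 2 * A * z0) ^ 2 / c := by
      rw [← sq_abs v]; field_simp; ring
    have : 0 ≤ (c * |v| / 2 - 2 * A * z0) ^ 2 / c := by positivity
    have : 0 ≤ A * (2 * z0 * |v|) := by positivity
    linarith
  nlinarith

lemma cw_laplace (θ z0 : ℝ) (hθ : 0 < θ) (hz : 0 < z0) (h : Real.tanh z0 = z0 / θ) (t : ℂ) :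
    Tendsto (fun n : ℕ => ∫ v : ℝ, (Set.Ioi (0:ℝ)).indicator
        (fun _ => Complex.exp (cwE θ z0 t n v)) (v + √(n:ℝ) * z0)) atTop
      (nhds (∫ v : ℝ, Complex.exp ((((1 - Real.tanh z0 ^ 2) - 1 / θ) / 2 : ℝ) * (v:ℂ) ^ 2 +
        t * z0 / θ ^ 2 * v + (- (t ^ 2 * z0 ^ 2 / (2 * θ ^ 3)))))) := by
  obtain ⟨b, hb, C, hC⟩ := cwE_re θ z0 hθ hz h t
  apply tendsto_integral_filter_of_dominated_convergence
    (fun v => Real.exp C * Real.exp (-b * v ^ 2))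
  · refine Eventually.of_forall fun n => Measurable.aestronglyMeasurable ?_
    have hcont : Continuous (cwPhi θ) :=
      continuous_iff_continuousAt.2 fun z => (cwPhi_deriv θ z hθ).continuousAt
    have hm : Measurable (fun v => Complex.exp (cwE θ z0 t n v)) := by
      apply Continuous.measurable
      unfold cwE
      fun_prop
    have : (fun v : ℝ => (Set.Ioi (0:ℝ)).indicator
        (fun _ => Complex.exp (cwE θ z0 t n v)) (v + √(n:ℝ) * z0)) =
        ((fun v => v + √(n:ℝ) * z0) ⁻¹' (Set.Ioi 0)).indicator
          (fun v => Complex.exp (cwE θ z0 t n v)) := by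
      funext v; simp only [Set.indicator, Set.mem_preimage]
    rw [this]
    exact hm.indicator (measurableSet_Ioi.preimage (by fun_prop))
  · filter_upwards [hC] with n hn
    refine Eventually.of_forall fun v => ?_
    by_cases hv : 0 < v + √(n:ℝ) * z0
    · rw [Set.indicator_of_mem (Set.mem_Ioi.2 hv), Complex.norm_exp, ← Real.exp_add]
      apply Real.exp_le_exp.2
      have := hn v hv
      linarith
    · rw [Set.indicator_of_notMem (by simpa using hv)]
      simp; positivity
  · exact (integrable_exp_neg_mul_sq hb).const_mul _
  · refine Eventually.of_forall fun v => ?_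
    have := (Complex.continuous_exp.tendsto _).comp (cwE_tendsto θ z0 hθ h t v)
    refine this.congr' ?_
    have hs : Tendsto (fun n : ℕ => v + √(n:ℝ) * z0) atTop atTop :=
      tendsto_atTop_add_const_left _ _ ((Real.tendsto_sqrt_atTop.comp
        tendsto_natCast_atTop_atTop).atTop_mul_const hz)
    filter_upwards [hs.eventually_gt_atTop 0] with n hn
    rw [Set.indicator_of_mem (Set.mem_Ioi.2 hn)]
    rfl

/-- Complex partition function. -/
noncomputable def cwM (θ : ℝ) (n : ℕ) (t : ℂ) : ℂ :=
  ∑ x : Fin n → Bool, Complex.exp ((n:ℂ) * (θ + t / (√(n:ℝ) : ℝ)) * (mag n x : ℂ) ^ 2 / 2)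

lemma cw_mgf (θ m : ℝ) (hθ : 0 < θ) (hm : 0 < m) (h : Real.tanh (θ * m) = m) (t : ℂ) :
    Tendsto (fun n : ℕ => cwM θ n t / cwM θ n 0 *
        Complex.exp (- (t * (√(n:ℝ) : ℝ) * (m:ℂ) ^ 2 / 2))) atTop
      (nhds (Complex.exp (t ^ 2 *
        ((m ^ 2 * ((1 - m ^ 2) / (1 - θ * (1 - m ^ 2))) : ℝ) : ℂ) / 2))) := by
  set z0 := θ * m with hz0
  have hz : 0 < z0 := by positivity
  have h' : Real.tanh z0 = z0 / θ := by rw [h, hz0]; field_simp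
  have hk := cw_kappa θ z0 hθ hz h'
  rw [h] at hk
  have hzm : z0 / θ = m := by rw [hz0]; field_simp
  have hθc : (θ : ℂ) ≠ 0 := by exact_mod_cast hθ.ne'
  have hb : ((((1 - m ^ 2) - 1 / θ) / 2 : ℝ) : ℂ).re < 0 := by
    rw [Complex.ofReal_re]; linarith
  obtain ⟨pre, hpre⟩ : ∃ pre : ℂ → ℂ, pre = fun T : ℂ => ((Real.pi : ℂ) / (1 / (2 * T))) ^ (1 / 2 : ℂ) :=
    ⟨_, rfl⟩
  obtain ⟨I, hI⟩ : ∃ I : ℂ → ℕ → ℂ, I = fun t n => ∫ v : ℝ, (Set.Ioi (0:ℝ)).indicator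
        (fun _ => Complex.exp (cwE θ z0 t n v)) (v + √(n:ℝ) * z0) := ⟨_, rfl⟩
  obtain ⟨q, hq⟩ : ∃ q : ℂ, q = (Real.pi / -((((1 - m ^ 2) - 1 / θ) / 2 : ℝ) : ℂ)) ^ (1 / 2 : ℂ) :=
    ⟨_, rfl⟩
  have hq0 : q ≠ 0 := by
    rw [hq, Complex.cpow_ne_zero_iff]
    left
    apply div_ne_zero (by exact_mod_cast Real.pi_ne_zero)
    rw [neg_ne_zero]
    intro h0; rw [h0] at hb; simp at hb
  have hIlim : ∀ t, Tendsto (I t) atTop (nhds (q * Complex.exp (t ^ 2 *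
        ((m ^ 2 * ((1 - m ^ 2) / (1 - θ * (1 - m ^ 2))) : ℝ) : ℂ) / 2))) := by
    intro t
    have := cw_laplace θ z0 hθ hz h' t
    rw [h, integral_cexp_quadratic hb, ← hq] at this
    rw [hI]
    refine this.trans (le_of_eq ?_)
    congr 3
    have hne : (1 - θ * (1 - m ^ 2) : ℂ) ≠ 0 := by
      have : (1 - θ * (1 - m ^ 2)) ≠ 0 := by
        rw [lt_div_iff₀ hθ] at hk; nlinarith
      exact_mod_cast this
    have e : ((((1 - m ^ 2) - 1 / θ) / 2 : ℝ) : ℂ) = - (1 - θ * (1 - m ^ 2)) / (2 * θ) := by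
      push_cast; field_simp; ring
    rw [e, hz0]
    push_cast
    generalize hD : (1 - θ * (1 - m ^ 2) : ℂ) = D at *
    have hm2 : (θ * (1 - m ^ 2) : ℂ) = 1 - D := by rw [← hD]; ring
    have hm3 : (1 - m ^ 2 : ℂ) = (1 - D) / θ := by rw [← hm2]; field_simp
    rw [hm3]
    field_simp
    ring
  have hprelim : ∀ t : ℂ, Tendsto (fun n : ℕ => pre (θ + t / (√(n:ℝ) : ℝ))) atTop
      (nhds (pre θ)) := by
    intro t
    have hbase : Tendsto (fun n : ℕ => (Real.pi / (1 / (2 * (θ + t / (√(n:ℝ) : ℝ)))) : ℂ)) atTop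
        (nhds (Real.pi / (1 / (2 * θ)) : ℂ)) := by
      simp only [one_div, div_inv_eq_mul]
      exact ((cw_Tn θ t).const_mul _).const_mul _
    have hsl : (Real.pi / (1 / (2 * θ)) : ℂ) ∈ Complex.slitPlane := by
      have : (Real.pi / (1 / (2 * θ)) : ℂ) = ((Real.pi / (1 / (2 * θ)) : ℝ) : ℂ) := by push_cast; rfl
      rw [this, Complex.ofReal_mem_slitPlane]
      have := Real.pi_pos
      positivity
    rw [hpre]
    exact (continuousAt_cpow_const hsl).tendsto.comp hbase
  have hpre0 : pre θ ≠ 0 := by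
    rw [hpre]
    simp only
    rw [Complex.cpow_ne_zero_iff]
    left
    simp [hθc, Real.pi_ne_zero]
  have hrep : ∀ t : ℂ, ∀ᶠ n : ℕ in atTop, cwM θ n t =
      (2 * 2 ^ n * Complex.exp ((n:ℂ) * cwPhi θ z0)) *
        (Complex.exp (t * (√(n:ℝ) : ℝ) * (m:ℂ) ^ 2 / 2) *
        (I t n / pre (θ + t / (√(n:ℝ) : ℝ)))) := by
    intro t
    have hre : ∀ᶠ n : ℕ in atTop, 0 < (θ + t / (√(n:ℝ) : ℝ) : ℂ).re := by
      have := (Complex.continuous_re.tendsto _).comp (cw_Tn θ t)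
      exact this.eventually_const_lt (by simpa using hθ)
    filter_upwards [hre, eventually_gt_atTop 0, (hprelim t).eventually_ne hpre0] with n hre hn hp
    have hT0 : (θ + t / (√(n:ℝ) : ℝ) : ℂ) ≠ 0 := by
      intro h0; rw [h0] at hre; simp at hre
    have e1 := cwF_integral n hn _ hre
    rw [cwF_half n _ hre (√(n:ℝ) * z0)] at e1
    have e2 : (fun v : ℝ => (Set.Ioi (0:ℝ)).indicator (cwF n (θ + t / (√(n:ℝ) : ℝ)))
        (v + √(n:ℝ) * z0)) = fun v : ℝ => (2 ^ n * Complex.exp (t * (√(n:ℝ) : ℝ) *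
          (m : ℂ) ^ 2 / 2 + (n:ℂ) * cwPhi θ z0)) * (Set.Ioi (0:ℝ)).indicator
        (fun _ => Complex.exp (cwE θ z0 t n v)) (v + √(n:ℝ) * z0) := by
      funext v
      by_cases hv : (v + √(n:ℝ) * z0) ∈ Set.Ioi (0:ℝ)
      · rw [Set.indicator_of_mem hv, Set.indicator_of_mem hv, cwF_cwE θ z0 hθ t n hn v hT0, hzm]
      · rw [Set.indicator_of_notMem hv, Set.indicator_of_notMem hv, mul_zero]
    rw [e2, integral_const_mul, Complex.exp_add] at e1
    have e3 : I t n = ∫ v : ℝ, (Set.Ioi (0:ℝ)).indicator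
        (fun _ => Complex.exp (cwE θ z0 t n v)) (v + √(n:ℝ) * z0) := by rw [hI]
    rw [← e3] at e1
    have e4 : pre (θ + t / (√(n:ℝ) : ℝ)) =
      (Real.pi / (1 / (2 * (θ + t / (√(n:ℝ) : ℝ))))) ^ (1 / 2 : ℂ) := by rw [hpre]
    rw [← e4] at e1
    rw [cwM]
    field_simp
    linear_combination -e1
  have hlim := ((hIlim t).div (hprelim t) hpre0).div ((hIlim 0).div (hprelim 0) hpre0)
    (div_ne_zero (mul_ne_zero hq0 (Complex.exp_ne_zero _)) hpre0)
  have heq : q * Complex.exp (t ^ 2 *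
        ((m ^ 2 * ((1 - m ^ 2) / (1 - θ * (1 - m ^ 2))) : ℝ) : ℂ) / 2) / pre θ /
      (q * Complex.exp (0 ^ 2 *
        ((m ^ 2 * ((1 - m ^ 2) / (1 - θ * (1 - m ^ 2))) : ℝ) : ℂ) / 2) / pre θ) =
      Complex.exp (t ^ 2 *
        ((m ^ 2 * ((1 - m ^ 2) / (1 - θ * (1 - m ^ 2))) : ℝ) : ℂ) / 2) := by
    have : (0:ℂ) ^ 2 * ((m ^ 2 * ((1 - m ^ 2) / (1 - θ * (1 - m ^ 2))) : ℝ) : ℂ) / 2 = 0 := by simp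
    rw [this, Complex.exp_zero]
    field_simp
  rw [heq] at hlim
  refine hlim.congr' ?_
  filter_upwards [hrep t, hrep 0] with n h1 h2
  rw [h1, h2, mul_div_mul_left]
  · rw [Complex.exp_neg]
    have := Complex.exp_ne_zero (t * (√(n:ℝ) : ℝ) * (m:ℂ) ^ 2 / 2)
    simp only [zero_mul, zero_div, Complex.exp_zero, one_mul, Pi.div_apply]
    field_simp
  · have := Complex.exp_ne_zero ((n:ℂ) * cwPhi θ z0)
    exact mul_ne_zero (by simp) this

/-- Real partition function. -/
noncomputable def cwS (n : ℕ) (θ : ℝ) : ℝ :=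
  ∑ x : Fin n → Bool, Real.exp ((n : ℝ) * θ * mag n x ^ 2 / 2)

lemma cwS_pos (n : ℕ) (θ : ℝ) : 0 < cwS n θ :=
  Finset.sum_pos (fun _ _ => Real.exp_pos _) Finset.univ_nonempty

lemma cw_univ (n : ℕ) (θ : ℝ) : cwUnnorm n θ Set.univ = ENNReal.ofReal (cwS n θ) := by
  rw [cwUnnorm, cwS, ENNReal.ofReal_sum_of_nonneg (fun _ _ => (Real.exp_pos _).le)]
  simp

instance cw_prob (n : ℕ) (θ : ℝ) : IsProbabilityMeasure (cwMeasure n θ) := by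
  constructor
  rw [cwMeasure, Measure.smul_apply, smul_eq_mul, ENNReal.inv_mul_cancel]
  · rw [cw_univ]; simpa using cwS_pos n θ
  · rw [cw_univ]; simp

lemma cw_integral (n : ℕ) (θ : ℝ) (g : (Fin n → Bool) → ℂ) :
    ∫ x, g x ∂ cwMeasure n θ =
      (∑ x, ((Real.exp ((n : ℝ) * θ * mag n x ^ 2 / 2) : ℝ) : ℂ) * g x) / (cwS n θ : ℂ) := by
  rw [cwMeasure, integral_smul_measure, cw_univ, cwUnnorm, integral_finsetSum_measure]
  · simp_rw [integral_smul_measure, integral_dirac]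
    rw [ENNReal.toReal_inv, ENNReal.toReal_ofReal (cwS_pos n θ).le, div_eq_inv_mul]
    rw [Complex.real_smul, Complex.ofReal_inv]
    congr 1
    refine Finset.sum_congr rfl fun x _ => ?_
    rw [ENNReal.toReal_ofReal (Real.exp_pos _).le, Complex.real_smul]
  · intro x _
    exact (Integrable.of_finite).smul_measure (by simp)

lemma cwM_real (θ h : ℝ) (n : ℕ) : cwM θ n h = (cwS n (θ + h / √(n:ℝ)) : ℂ) := by
  rw [cwM, cwS]
  push_cast
  rfl

theorem stmt17 (θ₀ h : ℝ) (hθ : 1 < θ₀) (m : ℝ → ℝ)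
    (hm : ∀ θ : ℝ, 1 < θ → 0 < m θ ∧ Real.tanh (θ * m θ) = m θ) :
    ∀ f : BoundedContinuousFunction ℝ ℝ,
      Tendsto (fun n : ℕ =>
          ∫ x, f (h / (2 * Real.sqrt (n : ℝ)) * ((n : ℝ) * mag n x ^ 2) -
              (Zcw n (θ₀ + h / Real.sqrt (n : ℝ)) - Zcw n θ₀)) ∂ cwMeasure n θ₀)
        atTop
        (nhds (∫ y, f y ∂ gaussianReal
          (-(h ^ 2 * (m θ₀ ^ 2 * ((1 - m θ₀ ^ 2) / (1 - θ₀ * (1 - m θ₀ ^ 2))))) / 2)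
          (Real.toNNReal
            (h ^ 2 * (m θ₀ ^ 2 * ((1 - m θ₀ ^ 2) / (1 - θ₀ * (1 - m θ₀ ^ 2)))))))) := by
  obtain ⟨hm0, hmt⟩ := hm θ₀ hθ
  have hθ0 : 0 < θ₀ := by linarith
  have hmgf := cw_mgf θ₀ (m θ₀) hθ0 hm0 hmt
  have hR0 : 0 ≤ m θ₀ ^ 2 * ((1 - m θ₀ ^ 2) / (1 - θ₀ * (1 - m θ₀ ^ 2))) := by
    have hk := cw_kappa θ₀ (θ₀ * m θ₀) hθ0 (by positivity) (by rw [hmt]; field_simp)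
    rw [hmt, lt_div_iff₀ hθ0] at hk
    have := Real.tanh_sq_lt_one (θ₀ * m θ₀)
    rw [hmt] at this
    apply mul_nonneg (sq_nonneg _) (div_nonneg (by linarith) (by linarith))
  generalize m θ₀ ^ 2 * ((1 - m θ₀ ^ 2) / (1 - θ₀ * (1 - m θ₀ ^ 2))) = R at *
  generalize m θ₀ = a at *
  -- the normalizers
  have hc : Tendsto (fun n : ℕ => (Zcw n (θ₀ + h / √(n:ℝ)) - Zcw n θ₀) - h * √(n:ℝ) * a ^ 2 / 2)
      atTop (nhds (h ^ 2 * R / 2)) := by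
    have h1 := (Complex.continuous_re.tendsto _).comp (hmgf (h:ℂ))
    have e1 : (Complex.exp ((h:ℂ) ^ 2 * (R:ℂ) / 2)).re = Real.exp (h ^ 2 * R / 2) := by
      rw [← Complex.ofReal_re (Real.exp _)]; push_cast; rfl
    rw [e1] at h1
    have h2 := h1.log (Real.exp_pos _).ne'
    rw [Real.log_exp] at h2
    refine h2.congr fun n => ?_
    have e2 : cwM θ₀ n 0 = (cwS n θ₀ : ℂ) := by
      have := cwM_real θ₀ 0 n; simpa using this
    have e3 : cwM θ₀ n h / cwM θ₀ n 0 * Complex.exp (- (h * (√(n:ℝ) : ℝ) * (a:ℂ) ^ 2 / 2)) =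
        ((cwS n (θ₀ + h / √(n:ℝ)) / cwS n θ₀ * Real.exp (-(h * √(n:ℝ) * a ^ 2 / 2)) : ℝ) : ℂ) := by
      rw [e2, cwM_real]; push_cast; rfl
    simp only [Function.comp]
    rw [e3, Complex.ofReal_re, Real.log_mul (div_pos (cwS_pos _ _) (cwS_pos _ _)).ne'
      (Real.exp_pos _).ne', Real.log_div (cwS_pos _ _).ne' (cwS_pos _ _).ne', Real.log_exp]
    simp only [Zcw, cwS]
    ring
  obtain ⟨L, hL⟩ : ∃ L : (n : ℕ) → (Fin n → Bool) → ℝ, L = fun (n : ℕ) (x : Fin n → Bool) =>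
      h / (2 * Real.sqrt (n : ℝ)) * ((n : ℝ) * mag n x ^ 2) -
              (Zcw n (θ₀ + h / Real.sqrt (n : ℝ)) - Zcw n θ₀) := ⟨_, rfl⟩
  have hLm : ∀ n, Measurable (L n) := fun n => measurable_of_finite _
  let μ : ℕ → ProbabilityMeasure ℝ := fun n =>
    ⟨(cwMeasure n θ₀).map (L n), Measure.isProbabilityMeasure_map (hLm n).aemeasurable⟩
  let ν : ProbabilityMeasure ℝ := ⟨gaussianReal (-(h ^ 2 * R) / 2) (Real.toNNReal (h ^ 2 * R)),
    inferInstance⟩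
  have hconv : Tendsto μ atTop (nhds ν) := by
    rw [ProbabilityMeasure.tendsto_iff_tendsto_charFun]
    intro s
    have hν : charFun (ν : Measure ℝ) s =
        Complex.exp (-(s * Complex.I * ((h ^ 2 * R / 2 : ℝ) : ℂ))) *
          Complex.exp ((s * Complex.I * h) ^ 2 * (R:ℂ) / 2) := by
      change charFun (gaussianReal _ _) s = _
      rw [charFun_gaussianReal, ← Complex.exp_add, Real.coe_toNNReal _ (by positivity)]
      congr 1
      push_cast
      rw [mul_pow, mul_pow, Complex.I_sq]
      ring
    rw [hν]
    have h1 := (Complex.continuous_ofReal.tendsto _).comp hc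
    have h2 := (Complex.continuous_exp.tendsto _).comp (h1.const_mul (s * Complex.I)).neg
    refine (h2.mul (hmgf (s * Complex.I * h))).congr' ?_
    filter_upwards [eventually_gt_atTop 0] with n hn
    have hn' : (0:ℝ) < n := by exact_mod_cast hn
    change _ = charFun ((cwMeasure n θ₀).map (L n)) s
    rw [charFun_apply_real, integral_map (hLm n).aemeasurable (by fun_prop), cw_integral]
    have e2 : cwM θ₀ n 0 = (cwS n θ₀ : ℂ) := by
      have := cwM_real θ₀ 0 n; simpa using this
    rw [e2]
    simp only [Function.comp]
    rw [mul_comm (cwM _ _ _ / _), ← mul_assoc, ← Complex.exp_add, ← mul_div_assoc]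
    congr 1
    rw [cwM, Finset.mul_sum]
    refine Finset.sum_congr rfl fun x _ => ?_
    rw [Complex.ofReal_exp, ← Complex.exp_add, ← Complex.exp_add, hL]
    congr 1
    beta_reduce
    have hs : (n:ℂ) = ((√(n:ℝ) : ℝ) : ℂ) ^ 2 := by
      rw [← Complex.ofReal_pow, Real.sq_sqrt hn'.le]; simp
    have hsc : ((√(n:ℝ) : ℝ) : ℂ) ≠ 0 := by exact_mod_cast (Real.sqrt_pos.2 hn').ne'
    generalize Zcw n (θ₀ + h / √(n:ℝ)) = Z1
    push_cast
    rw [hs]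
    field_simp
    ring
  intro f
  have := ProbabilityMeasure.tendsto_iff_forall_integral_tendsto.1 hconv f
  refine this.congr fun n => ?_
  change ∫ y, f y ∂ (cwMeasure n θ₀).map (L n) = _
  rw [integral_map (hLm n).aemeasurable f.continuous.aestronglyMeasurable, hL]
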